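/- Let μ be a Borel probability measure on ℝ and let t ≥ 1 be a real number. Define H_t(z) = t·z + (1−t)·F_μ(z) for z ∈ ℂ⁺. Then there exist a Borel probability measure μ_t on ℝ and an injective analytic map ω_t : ℂ⁺ → ℂ⁺ such that for all z ∈ ℂ⁺: F_{μ_t}(z) = F_μ(ω_t(z)), ω_t(z) = z/t + (1 − 1/t)·F_{μ_t}(z), and H_t(ω_t(z)) = z. -/

import Mathlib

open Complex Filter Set Topology MeasureTheory

/-- The open upper half-plane `ℂ⁺ = {z : ℂ | Im z > 0}`. -/
def UHP : Set ℂ := {z : ℂ | 0 < z.im}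

/-- The Cauchy transform `G_μ(z) = ∫ dμ(t)/(z − t)` of a measure `μ` on `ℝ`. -/
noncomputable def cauchyT (μ : Measure ℝ) (z : ℂ) : ℂ :=
  ∫ t, (z - (t : ℂ))⁻¹ ∂μ

/-- The reciprocal Cauchy transform `F_μ = 1/G_μ`. -/
noncomputable def Fmeas (μ : Measure ℝ) (z : ℂ) : ℂ := (cauchyT μ z)⁻¹

/-!
By the Schwarz–Pick lemma and the arithmetic–geometric mean inequality, an analytic self-map `F` of
`ℂ⁺` satisfies `|F w - F v| ≤ |w - v| (Im F w / Im w + Im F v / Im v) / 2`. For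
`H_t w = t w + (1 - t) F w` this turns into the expansion estimate
`|H_t w - H_t v| ≥ |w - v| (Im H_t w / Im w + Im H_t v / Im v) / 2`, so that over `ℂ⁺` the map `H_t`
is injective, locally biholomorphic and proper. By connectedness it has an analytic right inverse
`ω_t : ℂ⁺ → ℂ⁺`.

If `F(iy) ~ iy`, then `ω_t(iy) ~ iy`, and hence `F ∘ ω_t` has the same asymptotics. By Maassen's
theorem `F_μ ∘ ω_t` is therefore the reciprocal Cauchy transform of a probability measure. Maassen's
theorem follows from the Herglotz representation on the disc, carried over to `ℂ⁺` by a Cayley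
transform: the asymptotics on `iℝ₊` remove the atom at infinity and normalize the mass.
-/

open Metric
open scoped ComplexConjugate Real ENNReal

lemma isOpen_UHP : IsOpen UHP := isOpen_lt continuous_const continuous_im

lemma convex_UHP : Convex ℝ UHP := convex_halfSpace_im_gt 0

lemma I_mem_UHP : I ∈ UHP := by simp [UHP]

lemma ofReal_mul_I_mem_UHP {y : ℝ} (hy : 0 < y) : (y : ℂ) * I ∈ UHP := by simpa [UHP] using hy

section Cayley

/-- The Cayley transform of the unit disc onto `ℂ⁺` that sends `0` to `a` and `1` to `∞`. -/
noncomputable def cayley (a ζ : ℂ) : ℂ := (a - conj a * ζ) / (1 - ζ)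

/-- The inverse `ℂ⁺ → 𝔻` of the Cayley transform `cayley a`. -/
noncomputable def cayleySymm (a z : ℂ) : ℂ := (z - a) / (z - conj a)

variable {a z ζ : ℂ}

lemma sub_conj_ne_zero (ha : a ∈ UHP) (hz : 0 ≤ z.im) : z - conj a ≠ 0 := fun h ↦ by
  have ha' : 0 < a.im := ha
  have him := congrArg im h
  simp only [sub_im, conj_im, zero_im] at him
  linarith

lemma norm_sub_conj_sq (a z : ℂ) : ‖z - conj a‖ ^ 2 = ‖z - a‖ ^ 2 + 4 * (a.im * z.im) := by
  simp only [Complex.sq_norm, normSq_apply, sub_re, sub_im, conj_re, conj_im]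
  ring

lemma cayley_zero (a : ℂ) : cayley a 0 = a := by simp [cayley]

lemma im_cayley (a ζ : ℂ) : (cayley a ζ).im = a.im * ((1 - ‖ζ‖ ^ 2) / ‖1 - ζ‖ ^ 2) := by
  simp only [cayley, div_im, Complex.sq_norm, normSq_apply, sub_re, sub_im, mul_re, mul_im, conj_re,
    conj_im, one_re, one_im]
  ring

lemma cayley_mem_UHP (ha : a ∈ UHP) (hζ : ζ ∈ ball (0 : ℂ) 1) : cayley a ζ ∈ UHP := by
  rw [mem_ball_zero_iff] at hζ
  have hsub : 0 < ‖1 - ζ‖ := norm_pos_iff.2 <| sub_ne_zero.2 fun h ↦ by simp [← h] at hζ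
  have hsq : 0 < 1 - ‖ζ‖ ^ 2 := by nlinarith [norm_nonneg ζ]
  change 0 < (cayley a ζ).im
  rw [im_cayley]
  exact mul_pos ha (by positivity)

lemma differentiableOn_cayley (a : ℂ) : DifferentiableOn ℂ (cayley a) (ball 0 1) := by
  have hne : ∀ ζ ∈ ball (0 : ℂ) 1, 1 - ζ ≠ 0 := fun ζ hζ h ↦ by
    simp [← sub_eq_zero.1 h] at hζ
  unfold cayley
  fun_prop (disch := assumption)

lemma differentiableOn_cayleySymm (ha : a ∈ UHP) : DifferentiableOn ℂ (cayleySymm a) UHP := by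
  have hne : ∀ z ∈ UHP, z - conj a ≠ 0 := fun z hz ↦ sub_conj_ne_zero ha (le_of_lt hz)
  unfold cayleySymm
  fun_prop (disch := assumption)

lemma one_sub_cayleySymm (ha : a ∈ UHP) (hz : 0 ≤ z.im) :
    1 - cayleySymm a z = (a - conj a) / (z - conj a) := by
  have hza := sub_conj_ne_zero ha hz
  rw [cayleySymm]
  field_simp
  ring

lemma cayley_cayleySymm (ha : a ∈ UHP) (hz : 0 ≤ z.im) : cayley a (cayleySymm a z) = z := by
  have hza := sub_conj_ne_zero ha hz
  have haa := sub_conj_ne_zero ha (le_of_lt ha)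
  rw [cayley, one_sub_cayleySymm ha hz, cayleySymm]
  field_simp
  ring

lemma cayleySymm_cayley (ha : a ∈ UHP) (hζ : ζ ≠ 1) : cayleySymm a (cayley a ζ) = ζ := by
  have hsub : 1 - ζ ≠ 0 := sub_ne_zero.2 hζ.symm
  have haa := sub_conj_ne_zero ha (le_of_lt ha)
  have hden : cayley a ζ - conj a = (a - conj a) / (1 - ζ) := by
    rw [cayley]
    field_simp
    ring
  rw [cayleySymm, hden, cayley]
  field_simp
  ring

lemma one_sub_norm_cayleySymm_sq (ha : a ∈ UHP) (hz : 0 ≤ z.im) :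
    1 - ‖cayleySymm a z‖ ^ 2 = 4 * (a.im * z.im) / ‖z - conj a‖ ^ 2 := by
  have hza : ‖z - conj a‖ ≠ 0 := norm_ne_zero_iff.2 (sub_conj_ne_zero ha hz)
  rw [cayleySymm, norm_div]
  field_simp
  rw [norm_sub_conj_sq]
  ring

lemma cayleySymm_mem_ball (ha : a ∈ UHP) (hz : z ∈ UHP) : cayleySymm a z ∈ ball (0 : ℂ) 1 := by
  have hza : 0 < ‖z - conj a‖ := norm_pos_iff.2 (sub_conj_ne_zero ha (le_of_lt hz))
  have hpos : 0 < 1 - ‖cayleySymm a z‖ ^ 2 := by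
    rw [one_sub_norm_cayleySymm_sq ha (le_of_lt hz)]
    have := mul_pos (show 0 < a.im from ha) (show 0 < z.im from hz)
    positivity
  rw [mem_ball_zero_iff]
  nlinarith [norm_nonneg (cayleySymm a z)]

end Cayley

section SchwarzPick

variable {F : ℂ → ℂ} {z w : ℂ}

lemma norm_cayleySymm_map_le (hd : DifferentiableOn ℂ F UHP) (hF : MapsTo F UHP UHP)
    (hz : z ∈ UHP) (hw : w ∈ UHP) : ‖cayleySymm (F w) (F z)‖ ≤ ‖cayleySymm w z‖ := by
  have hcayley : MapsTo (cayley w) (ball 0 1) UHP := fun ζ ↦ cayley_mem_UHP hw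
  have hFcayley : MapsTo (F ∘ cayley w) (ball 0 1) UHP := hF.comp hcayley
  have hself : MapsTo (cayleySymm (F w) ∘ F ∘ cayley w) (ball 0 1) (closedBall 0 1) :=
    fun ζ hζ ↦ ball_subset_closedBall (cayleySymm_mem_ball (hF hw) (hFcayley hζ))
  have hdiff : DifferentiableOn ℂ (cayleySymm (F w) ∘ F ∘ cayley w) (ball 0 1) :=
    (differentiableOn_cayleySymm (hF hw)).comp
      (hd.comp (differentiableOn_cayley w) hcayley) hFcayley
  have hschwarz := norm_le_norm_of_mapsTo_ball hdiff hself (by simp [cayley_zero, cayleySymm])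
    (mem_ball_zero_iff.1 (cayleySymm_mem_ball hw hz))
  simpa only [Function.comp_apply, cayley_cayleySymm hw (le_of_lt hz)] using hschwarz

lemma schwarz_pick (hd : DifferentiableOn ℂ F UHP) (hF : MapsTo F UHP UHP)
    (hz : z ∈ UHP) (hw : w ∈ UHP) :
    ‖F z - F w‖ ^ 2 * (w.im * z.im) ≤ ‖z - w‖ ^ 2 * ((F w).im * (F z).im) := by
  have hzw : 0 < ‖z - conj w‖ := norm_pos_iff.2 (sub_conj_ne_zero hw (le_of_lt hz))
  have hFzw : 0 < ‖F z - conj (F w)‖ :=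
    norm_pos_iff.2 (sub_conj_ne_zero (hF hw) (le_of_lt (hF hz)))
  have hle : 1 - ‖cayleySymm w z‖ ^ 2 ≤ 1 - ‖cayleySymm (F w) (F z)‖ ^ 2 := by
    gcongr
    exact norm_cayleySymm_map_le hd hF hz hw
  rw [one_sub_norm_cayleySymm_sq hw (le_of_lt hz),
    one_sub_norm_cayleySymm_sq (hF hw) (le_of_lt (hF hz)),
    div_le_div_iff₀ (by positivity) (by positivity), norm_sub_conj_sq, norm_sub_conj_sq] at hle
  linarith

end SchwarzPick

section SelfMap

variable {F : ℂ → ℂ} {z w : ℂ}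

lemma norm_map_sub_le (hd : DifferentiableOn ℂ F UHP) (hF : MapsTo F UHP UHP)
    (hz : z ∈ UHP) (hw : w ∈ UHP) :
    ‖F z - F w‖ ≤ ‖z - w‖ * (((F z).im / z.im + (F w).im / w.im) / 2) := by
  have hz' : 0 < z.im := hz
  have hw' : 0 < w.im := hw
  have hFz : 0 < (F z).im := hF hz
  have hFw : 0 < (F w).im := hF hw
  refine (pow_le_pow_iff_left₀ (norm_nonneg _) (by positivity) two_ne_zero).1 ?_
  calc ‖F z - F w‖ ^ 2
      ≤ ‖z - w‖ ^ 2 * ((F z).im / z.im * ((F w).im / w.im)) := by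
        have := schwarz_pick hd hF hz hw
        field_simp
        linarith
    _ ≤ ‖z - w‖ ^ 2 * (((F z).im / z.im + (F w).im / w.im) / 2) ^ 2 := by
        gcongr
        linarith [sq_nonneg ((F z).im / z.im - (F w).im / w.im)]
    _ = _ := by ring

end SelfMap

lemma tendsto_div_ofReal_mul_I (c : ℂ) :
    Tendsto (fun y : ℝ ↦ c / (y * I)) atTop (𝓝 0) := by
  refine tendsto_zero_iff_norm_tendsto_zero.2 ?_
  have hnorm : Tendsto (fun y : ℝ ↦ ‖c‖ / |y|) atTop (𝓝 0) :=
    tendsto_const_nhds.div_atTop tendsto_abs_atTop_atTop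
  simpa using hnorm

lemma re_div_ofReal_mul_I (z : ℂ) (y : ℝ) : (z / (y * I)).re = z.im / y := by
  rcases eq_or_ne y 0 with rfl | hy
  · simp
  · simp only [div_re, mul_re, mul_im, normSq_apply, ofReal_re, ofReal_im, I_re, I_im]
    field_simp
    ring

/-- The analytic self-maps `F` of `ℂ⁺` with `F(iy) ~ iy` as `y → ∞`. By Maassen's theorem
(`IsNormalizedPick.exists_eqOn_Fmeas`) these are exactly the reciprocal Cauchy transforms of
probability measures on `ℝ`. -/
structure IsNormalizedPick (F : ℂ → ℂ) : Prop where
  differentiableOn : DifferentiableOn ℂ F UHP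
  mapsTo : MapsTo F UHP UHP
  tendsto_div : Tendsto (fun y : ℝ ↦ F (y * I) / (y * I)) atTop (𝓝 1)

namespace IsNormalizedPick

variable {F g : ℂ → ℂ}

/- Schwarz–Pick between `z` and `iy`, divided by `y³`, tends to the claim as `y → ∞`. -/
lemma im_le (hF : IsNormalizedPick F) {z : ℂ} (hz : z ∈ UHP) : z.im ≤ (F z).im := by
  have hlhs : Tendsto (fun y : ℝ ↦ ‖F z / (y * I) - F (y * I) / (y * I)‖ ^ 2 * z.im) atTop
      (𝓝 (‖(0 : ℂ) - 1‖ ^ 2 * z.im)) :=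
    (((tendsto_div_ofReal_mul_I _).sub hF.tendsto_div).norm.pow 2).mul_const _
  have hrhs : Tendsto
      (fun y : ℝ ↦ ‖z / (y * I) - 1‖ ^ 2 * ((F (y * I) / (y * I)).re * (F z).im)) atTop
      (𝓝 (‖(0 : ℂ) - 1‖ ^ 2 * ((1 : ℂ).re * (F z).im))) :=
    (((tendsto_div_ofReal_mul_I z).sub_const 1).norm.pow 2).mul
      (((continuous_re.tendsto 1).comp hF.tendsto_div).mul_const _)
  suffices h : ‖(0 : ℂ) - 1‖ ^ 2 * z.im ≤ ‖(0 : ℂ) - 1‖ ^ 2 * ((1 : ℂ).re * (F z).im) by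
    simpa using h
  refine le_of_tendsto_of_tendsto hlhs hrhs ?_
  filter_upwards [eventually_gt_atTop 0] with y hy
  have hyI : (y : ℂ) * I ≠ 0 := by simpa using hy.ne'
  have hpick := schwarz_pick hF.differentiableOn hF.mapsTo hz (ofReal_mul_I_mem_UHP hy)
  rw [← sub_div, div_sub_one hyI, norm_div, norm_div, re_div_ofReal_mul_I, norm_mul, norm_I,
    norm_real, Real.norm_of_nonneg hy.le, mul_one]
  rw [im_ofReal_mul, I_im, mul_one] at hpick
  field_simp
  linarith

lemma comp (hF : IsNormalizedPick F) (hg : IsNormalizedPick g) : IsNormalizedPick (F ∘ g) where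
  differentiableOn := hF.differentiableOn.comp hg.differentiableOn hg.mapsTo
  mapsTo := hF.mapsTo.comp hg.mapsTo
  tendsto_div := by
    have herr : Tendsto (fun y : ℝ ↦ ‖g (y * I) / (y * I) - 1‖) atTop (𝓝 0) := by
      simpa using (hg.tendsto_div.sub_const 1).norm
    have hbound : Tendsto
        (fun y : ℝ ↦ 2 * ‖g (y * I) / (y * I) - 1‖ * ‖F (y * I) / (y * I)‖) atTop (𝓝 0) := by
      simpa using (herr.const_mul 2).mul hF.tendsto_div.norm
    suffices h : Tendsto (fun y : ℝ ↦ F (g (y * I)) / (y * I) - F (y * I) / (y * I)) atTop (𝓝 0) by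
      simpa using h.add hF.tendsto_div
    refine squeeze_zero_norm' ?_ hbound
    filter_upwards [eventually_gt_atTop 0, herr.eventually_le_const one_pos] with y hy hle
    have hiy := ofReal_mul_I_mem_UHP hy
    have hyI : (y : ℂ) * I ≠ 0 := by simpa using hy.ne'
    have hnorm : ‖(y : ℂ) * I‖ = y := by simp [abs_of_pos hy]
    have hgiy : y ≤ (g (y * I)).im := by simpa using hg.im_le hiy
    have hdist : ‖F (g (y * I)) / (y * I) - F (y * I) / (y * I)‖ ≤ ‖g (y * I) / (y * I) - 1‖ *
        (((F (g (y * I))).im / (g (y * I)).im + (F (y * I)).im / ((y : ℂ) * I).im) / 2) := by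
      rw [← sub_div, div_sub_one hyI, norm_div, norm_div, hnorm, div_mul_eq_mul_div]
      gcongr
      exact norm_map_sub_le hF.differentiableOn hF.mapsTo (hg.mapsTo hiy) hiy
    have hq : (F (g (y * I))).im / (g (y * I)).im ≤
        ‖F (g (y * I)) / (y * I) - F (y * I) / (y * I)‖ + ‖F (y * I) / (y * I)‖ := by
      refine le_trans ?_ (norm_le_norm_sub_add _ _)
      rw [norm_div, hnorm]
      exact div_le_div₀ (norm_nonneg _) (im_le_norm _) hy hgiy
    have hp : (F (y * I)).im / ((y : ℂ) * I).im ≤ ‖F (y * I) / (y * I)‖ := by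
      rw [norm_div, hnorm, im_ofReal_mul, I_im, mul_one]
      gcongr
      exact im_le_norm _
    nlinarith [norm_nonneg (g (y * I) / (y * I) - 1), norm_nonneg (F (y * I) / (y * I)),
      norm_nonneg (F (g (y * I)) / (y * I) - F (y * I) / (y * I))]

end IsNormalizedPick

/-- The map `H_t(w) = t w + (1 - t) F(w)`, whose right inverse on `ℂ⁺` is the subordination
function of the `t`-th free convolution power. -/
noncomputable def powerMap (F : ℂ → ℂ) (t : ℝ) (w : ℂ) : ℂ := t * w + (1 - t) * F w

section PowerMap

variable {F : ℂ → ℂ} {t : ℝ} {v w : ℂ}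

lemma im_powerMap (F : ℂ → ℂ) (t : ℝ) (w : ℂ) :
    (powerMap F t w).im = t * w.im + (1 - t) * (F w).im := by
  simp [powerMap]

lemma differentiableOn_powerMap (hd : DifferentiableOn ℂ F UHP) (t : ℝ) :
    DifferentiableOn ℂ (powerMap F t) UHP := by
  unfold powerMap
  fun_prop

lemma mul_norm_sub_le_norm_powerMap_sub (hd : DifferentiableOn ℂ F UHP) (hF : MapsTo F UHP UHP)
    (ht : 1 ≤ t) (hw : w ∈ UHP) (hv : v ∈ UHP) :
    ((powerMap F t w).im / w.im + (powerMap F t v).im / v.im) / 2 * ‖w - v‖ ≤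
      ‖powerMap F t w - powerMap F t v‖ := by
  have hw' : w.im ≠ 0 := ne_of_gt hw
  have hv' : v.im ≠ 0 := ne_of_gt hv
  have hsplit : t * (w - v) =
      (powerMap F t w - powerMap F t v) + ((t - 1 : ℝ) : ℂ) * (F w - F v) := by
    simp only [powerMap, ofReal_sub, ofReal_one]
    ring
  have htri : t * ‖w - v‖ ≤ ‖powerMap F t w - powerMap F t v‖ + (t - 1) * ‖F w - F v‖ := by
    have h := norm_add_le (powerMap F t w - powerMap F t v) (((t - 1 : ℝ) : ℂ) * (F w - F v))
    rwa [← hsplit, norm_mul, norm_mul, norm_real, norm_real, Real.norm_of_nonneg (by linarith),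
      Real.norm_of_nonneg (by linarith)] at h
  have hpick := mul_le_mul_of_nonneg_left (norm_map_sub_le hd hF hw hv) (sub_nonneg.2 ht)
  calc _ = t * ‖w - v‖ - (t - 1) * (‖w - v‖ * (((F w).im / w.im + (F v).im / v.im) / 2)) := by
        rw [im_powerMap, im_powerMap]
        field_simp
        ring
    _ ≤ _ := by linarith

lemma mul_norm_sub_le_norm_powerMap_sub_of_nonneg (hd : DifferentiableOn ℂ F UHP)
    (hF : MapsTo F UHP UHP) (ht : 1 ≤ t) (hw : w ∈ UHP) (hv : v ∈ UHP)
    (hHw : 0 ≤ (powerMap F t w).im) :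
    (powerMap F t v).im / v.im / 2 * ‖w - v‖ ≤ ‖powerMap F t w - powerMap F t v‖ := by
  have hw' : 0 < w.im := hw
  refine le_trans ?_ (mul_norm_sub_le_norm_powerMap_sub hd hF ht hw hv)
  gcongr
  exact le_add_of_nonneg_left (by positivity)

lemma le_norm_deriv_powerMap (hd : DifferentiableOn ℂ F UHP) (hF : MapsTo F UHP UHP)
    (ht : 1 ≤ t) (hv : v ∈ UHP) : (powerMap F t v).im / v.im ≤ ‖deriv (powerMap F t) v‖ := by
  have hv' : v.im ≠ 0 := ne_of_gt hv
  have hdiff : DifferentiableAt ℂ (powerMap F t) v :=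
    (differentiableOn_powerMap hd t).differentiableAt (isOpen_UHP.mem_nhds hv)
  have hlower : ContinuousAt
      (fun w ↦ ((powerMap F t w).im / w.im + (powerMap F t v).im / v.im) / 2) v := by
    have himH := continuous_im.continuousAt.comp hdiff.continuousAt
    exact ((himH.div continuous_im.continuousAt hv').add_const _).div_const 2
  have hlim := hlower.tendsto.mono_left (nhdsWithin_le_nhds (s := {v}ᶜ))
  rw [add_self_div_two] at hlim
  refine le_of_tendsto_of_tendsto hlim hdiff.hasDerivAt.tendsto_slope.norm ?_
  filter_upwards [self_mem_nhdsWithin, nhdsWithin_le_nhds (isOpen_UHP.mem_nhds hv)] with w hne hw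
  rw [slope_def_field, norm_div, le_div_iff₀ (norm_pos_iff.2 (sub_ne_zero.2 hne))]
  exact mul_norm_sub_le_norm_powerMap_sub hd hF ht hw hv

lemma differentiableOn_of_rightInvOn_powerMap (hd : DifferentiableOn ℂ F UHP)
    (hF : MapsTo F UHP UHP) (ht : 1 ≤ t) {ω : ℂ → ℂ} (hω : MapsTo ω UHP UHP)
    (hinv : RightInvOn ω (powerMap F t) UHP) : DifferentiableOn ℂ ω UHP := by
  intro z hz
  have hexp : ∀ z' ∈ UHP, z.im / (ω z).im / 2 * ‖ω z' - ω z‖ ≤ ‖z' - z‖ := fun z' hz' ↦ by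
    have h := mul_norm_sub_le_norm_powerMap_sub_of_nonneg hd hF ht (hω hz') (hω hz)
      (by rw [hinv hz']; exact le_of_lt hz')
    rwa [hinv hz, hinv hz'] at h
  have hc : 0 < z.im / (ω z).im / 2 := half_pos (div_pos hz (hω hz))
  have hcont : ContinuousAt ω z := by
    refine tendsto_iff_norm_sub_tendsto_zero.2 (squeeze_zero' (.of_forall fun _ ↦ norm_nonneg _)
      ?_ (g := fun z' ↦ ‖z' - z‖ / (z.im / (ω z).im / 2)) ?_)
    · filter_upwards [isOpen_UHP.mem_nhds hz] with z' hz'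
      exact (le_div_iff₀' hc).2 (hexp z' hz')
    · simpa using (tendsto_norm_sub_self z).div_const (z.im / (ω z).im / 2)
  have hderiv : deriv (powerMap F t) (ω z) ≠ 0 := by
    have h := le_norm_deriv_powerMap hd hF ht (hω hz)
    rw [hinv hz] at h
    exact norm_pos_iff.1 ((div_pos hz (hω hz)).trans_le h)
  have hdiff : DifferentiableAt ℂ (powerMap F t) (ω z) :=
    (differentiableOn_powerMap hd t).differentiableAt (isOpen_UHP.mem_nhds (hω hz))
  exact (hdiff.hasDerivAt.of_local_left_inverse hcont hderiv
    (eventually_of_mem (isOpen_UHP.mem_nhds hz) hinv)).differentiableAt.differentiableWithinAt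

lemma isOpen_UHP_inter_image_powerMap (hd : DifferentiableOn ℂ F UHP)
    (hF : MapsTo F UHP UHP) (ht : 1 ≤ t) : IsOpen (UHP ∩ powerMap F t '' UHP) := by
  refine isOpen_iff_mem_nhds.2 ?_
  rintro _ ⟨hHv, v, hv, rfl⟩
  have han : AnalyticAt ℂ (powerMap F t) v :=
    (differentiableOn_powerMap hd t).analyticAt (isOpen_UHP.mem_nhds hv)
  have hderiv : deriv (powerMap F t) v ≠ 0 := norm_pos_iff.1 <|
    (div_pos hHv hv).trans_le (le_norm_deriv_powerMap hd hF ht hv)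
  refine inter_mem (isOpen_UHP.mem_nhds hHv) ?_
  rw [← han.hasStrictDerivAt.map_nhds_eq hderiv]
  exact image_mem_map (isOpen_UHP.mem_nhds hv)

end PowerMap

namespace IsNormalizedPick

variable {F : ℂ → ℂ} {t : ℝ}

lemma im_powerMap_le (hF : IsNormalizedPick F) (ht : 1 ≤ t) {w : ℂ} (hw : w ∈ UHP) :
    (powerMap F t w).im ≤ w.im := by
  rw [im_powerMap]
  nlinarith [hF.im_le hw]

lemma tendsto_powerMap_div (hF : IsNormalizedPick F) (t : ℝ) :
    Tendsto (fun y : ℝ ↦ powerMap F t (y * I) / (y * I)) atTop (𝓝 1) := by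
  have hlim : Tendsto (fun y : ℝ ↦ (t : ℂ) + (1 - t) * (F (y * I) / (y * I))) atTop (𝓝 1) := by
    simpa using (hF.tendsto_div.const_mul (1 - (t : ℂ))).const_add (t : ℂ)
  refine hlim.congr' ?_
  filter_upwards [eventually_gt_atTop 0] with y hy
  have hyI : (y : ℂ) * I ≠ 0 := by simpa using hy.ne'
  rw [powerMap, add_div, mul_div_assoc, div_self hyI, mul_one, mul_div_assoc]

lemma tendsto_im_powerMap_div (hF : IsNormalizedPick F) (t : ℝ) :
    Tendsto (fun y : ℝ ↦ (powerMap F t (y * I)).im / y) atTop (𝓝 1) := by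
  simpa only [Function.comp_def, re_div_ofReal_mul_I, one_re] using
    (continuous_re.tendsto 1).comp (hF.tendsto_powerMap_div t)

lemma UHP_inter_image_powerMap_nonempty (hF : IsNormalizedPick F) (t : ℝ) :
    (UHP ∩ powerMap F t '' UHP).Nonempty := by
  obtain ⟨y, hy, him⟩ := ((eventually_gt_atTop 0).and
    ((hF.tendsto_im_powerMap_div t).eventually_const_lt one_pos)).exists
  refine ⟨powerMap F t (y * I), ?_, _, ofReal_mul_I_mem_UHP hy, rfl⟩
  exact (div_pos_iff_of_pos_right hy).1 him

/- The points of `ℂ⁺` with images near `z` stay away from `ℝ` because `H_t` decreases imaginary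
parts, and stay bounded because `H_t` expands distances to a point with image in `ℂ⁺`. -/
lemma closure_inter_image_powerMap_subset (hF : IsNormalizedPick F) (ht : 1 ≤ t) :
    closure (UHP ∩ powerMap F t '' UHP) ∩ UHP ⊆ UHP ∩ powerMap F t '' UHP := by
  rintro z ⟨hzcl, hz⟩
  have hz' : 0 < z.im := hz
  obtain ⟨_, hHv, v, hv, rfl⟩ := hF.UHP_inter_image_powerMap_nonempty t
  set c : ℝ := (powerMap F t v).im / v.im / 2 with hc
  have hcpos : 0 < c := half_pos (div_pos hHv hv)
  set K : Set ℂ := closedBall v ((z.im / 2 + ‖z - powerMap F t v‖) / c) ∩ {w | z.im / 2 ≤ w.im}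
  have hKUHP : K ⊆ UHP := fun w hw ↦ (half_pos hz').trans_le hw.2
  have hK : IsCompact K :=
    (isCompact_closedBall _ _).inter_right (isClosed_le continuous_const continuous_im)
  have hnear : UHP ∩ powerMap F t '' UHP ∩ ball z (z.im / 2) ⊆ powerMap F t '' K := by
    rintro _ ⟨⟨hHw, w, hw, rfl⟩, hball⟩
    rw [mem_ball_iff_norm] at hball
    refine ⟨w, ⟨?_, ?_⟩, rfl⟩
    · rw [mem_closedBall_iff_norm, le_div_iff₀' hcpos]
      have hexp := mul_norm_sub_le_norm_powerMap_sub_of_nonneg hF.differentiableOn hF.mapsTo ht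
        hw hv (le_of_lt hHw)
      rw [← hc] at hexp
      have htri := norm_sub_le_norm_sub_add_norm_sub (powerMap F t w) z (powerMap F t v)
      linarith
    · have him := (abs_le.1 (abs_im_le_norm (powerMap F t w - z))).1
      have hle := hF.im_powerMap_le ht hw
      rw [sub_im] at him
      change z.im / 2 ≤ w.im
      linarith
  have hclosed : IsClosed (powerMap F t '' K) :=
    (hK.image_of_continuousOn
      ((differentiableOn_powerMap hF.differentiableOn t).continuousOn.mono hKUHP)).isClosed
  have hzK : z ∈ powerMap F t '' K := closure_minimal hnear hclosed
    (isOpen_ball.closure_inter ⟨hzcl, mem_ball_self (half_pos hz')⟩)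
  exact ⟨hz, image_mono hKUHP hzK⟩

lemma surjOn_powerMap (hF : IsNormalizedPick F) (ht : 1 ≤ t) : SurjOn (powerMap F t) UHP UHP := by
  obtain ⟨z, hz⟩ := hF.UHP_inter_image_powerMap_nonempty t
  exact (convex_UHP.isPreconnected.subset_of_closure_inter_subset
    (isOpen_UHP_inter_image_powerMap hF.differentiableOn hF.mapsTo ht) ⟨z, hz.1, hz⟩
    (hF.closure_inter_image_powerMap_subset ht)).trans inter_subset_right

lemma of_rightInvOn_powerMap (hF : IsNormalizedPick F) (ht : 1 ≤ t) {ω : ℂ → ℂ}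
    (hω : MapsTo ω UHP UHP) (hinv : RightInvOn ω (powerMap F t) UHP) : IsNormalizedPick ω where
  differentiableOn :=
    differentiableOn_of_rightInvOn_powerMap hF.differentiableOn hF.mapsTo ht hω hinv
  mapsTo := hω
  tendsto_div := by
    have hbound : Tendsto (fun y : ℝ ↦ 4 * ‖1 - powerMap F t (y * I) / (y * I)‖) atTop (𝓝 0) := by
      simpa using ((hF.tendsto_powerMap_div t).const_sub 1).norm.const_mul 4
    refine tendsto_iff_norm_sub_tendsto_zero.2
      (squeeze_zero' (.of_forall fun _ ↦ norm_nonneg _) ?_ hbound)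
    filter_upwards [eventually_gt_atTop 0,
      (hF.tendsto_im_powerMap_div t).eventually_const_le one_half_lt_one] with y hy hhalf
    have hiy := ofReal_mul_I_mem_UHP hy
    have hyI : (y : ℂ) * I ≠ 0 := by simpa using hy.ne'
    have hexp := mul_norm_sub_le_norm_powerMap_sub_of_nonneg hF.differentiableOn hF.mapsTo ht
      (hω hiy) hiy (by rw [hinv hiy]; exact le_of_lt hiy)
    rw [hinv hiy, im_ofReal_mul, I_im, mul_one] at hexp
    rw [div_sub_one hyI, one_sub_div hyI, norm_div, norm_div, ← mul_div_assoc]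
    gcongr
    nlinarith [norm_nonneg (ω (y * I) - y * I)]

lemma exists_rightInvOn_powerMap (hF : IsNormalizedPick F) (ht : 1 ≤ t) :
    ∃ ω : ℂ → ℂ, IsNormalizedPick ω ∧ RightInvOn ω (powerMap F t) UHP := by
  choose! ω hω hinv using hF.surjOn_powerMap ht
  exact ⟨ω, hF.of_rightInvOn_powerMap ht hω hinv, hinv⟩

end IsNormalizedPick

section CauchyTransform

variable {μ : Measure ℝ} {z : ℂ}

lemma inv_mem_UHP_iff : z⁻¹ ∈ UHP ↔ z.im < 0 := by
  rcases eq_or_ne z 0 with rfl | hz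
  · simp [UHP]
  · simp [UHP, inv_im, div_pos_iff_of_pos_right (normSq_pos.2 hz)]

lemma sub_ofReal_mem_UHP (hz : z ∈ UHP) (x : ℝ) : z - x ∈ UHP := by simpa [UHP] using hz

lemma im_inv_sub_ofReal_neg (hz : z ∈ UHP) (x : ℝ) : ((z - x)⁻¹).im < 0 := by
  rw [← inv_mem_UHP_iff, inv_inv]
  exact sub_ofReal_mem_UHP hz x

lemma notMem_algebraMap_image_of_mem_UHP (hz : z ∈ UHP) (s : Set ℝ) :
    z ∉ algebraMap ℝ ℂ '' s := by
  rintro ⟨x, -, rfl⟩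
  simp [UHP] at hz

lemma neg_resolvent_eq_inv (z : ℂ) (x : ℝ) : -resolvent z x = (z - x)⁻¹ := by
  rw [resolvent, Ring.inverse_eq_inv, ← inv_neg, neg_sub, coe_algebraMap]

lemma cauchyT_eq_neg_resolventTransform (μ : Measure ℝ) (z : ℂ) :
    cauchyT μ z = -resolventTransform μ z := by
  simp only [cauchyT, resolventTransform_apply, ← integral_neg, neg_resolvent_eq_inv]

lemma differentiableOn_cauchyT [IsFiniteMeasure μ] : DifferentiableOn ℂ (cauchyT μ) UHP := by
  intro z hz
  have hres := hasDerivAt_resolventTransform z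
    (notMem_algebraMap_image_of_mem_UHP hz μ.support)
  rw [funext (cauchyT_eq_neg_resolventTransform μ)]
  exact hres.differentiableAt.neg.differentiableWithinAt

lemma integrable_inv_sub_ofReal [IsFiniteMeasure μ] (hz : z ∈ UHP) :
    Integrable (fun x : ℝ ↦ (z - x)⁻¹) μ := by
  simpa only [← neg_resolvent_eq_inv] using
    (integrable_resolvent (notMem_algebraMap_image_of_mem_UHP hz μ.support)).fun_neg

lemma im_cauchyT [IsFiniteMeasure μ] (hz : z ∈ UHP) :
    (cauchyT μ z).im = ∫ x : ℝ, ((z - x)⁻¹).im ∂μ :=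
  (integral_im (integrable_inv_sub_ofReal hz)).symm

lemma ofReal_neg_im_cauchyT [IsFiniteMeasure μ] (hz : z ∈ UHP) :
    ENNReal.ofReal (-(cauchyT μ z).im) = ∫⁻ x : ℝ, ENNReal.ofReal (-((z - x)⁻¹).im) ∂μ := by
  rw [im_cauchyT hz, ← integral_neg]
  exact ofReal_integral_eq_lintegral_ofReal (integrable_inv_sub_ofReal hz).im.neg
    (.of_forall fun x ↦ neg_nonneg.2 (im_inv_sub_ofReal_neg hz x).le)

lemma im_cauchyT_neg [IsFiniteMeasure μ] [NeZero μ] (hz : z ∈ UHP) : (cauchyT μ z).im < 0 := by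
  rw [← neg_pos, ← ENNReal.ofReal_pos, ofReal_neg_im_cauchyT hz, lintegral_pos_iff_support]
  · have hsupp : Function.support (fun x : ℝ ↦ ENNReal.ofReal (-((z - x)⁻¹).im)) = univ :=
      eq_univ_of_forall fun x ↦
        (ENNReal.ofReal_pos.2 (neg_pos.2 (im_inv_sub_ofReal_neg hz x))).ne'
    rw [hsupp]
    exact NeZero.pos _
  · fun_prop

lemma tendsto_mul_cauchyT [IsProbabilityMeasure μ] :
    Tendsto (fun y : ℝ ↦ y * I * cauchyT μ (y * I)) atTop (𝓝 1) := by
  have hlim : Tendsto (fun y : ℝ ↦ ∫ x : ℝ, y * I * (y * I - x)⁻¹ ∂μ) atTop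
      (𝓝 (∫ _ : ℝ, (1 : ℂ) ∂μ)) := by
    refine tendsto_integral_filter_of_dominated_convergence (fun _ ↦ 1)
      (.of_forall fun y ↦ by fun_prop) ?_ (integrable_const 1) (.of_forall fun x ↦ ?_)
    · filter_upwards [eventually_gt_atTop 0] with y hy
      refine .of_forall fun x ↦ ?_
      have hpos : 0 < ‖(y : ℂ) * I - x‖ :=
        norm_pos_iff.2 fun h ↦ by simpa [hy.ne'] using congrArg im h
      rw [norm_mul, norm_inv, ← div_eq_mul_inv, div_le_one hpos]
      simpa [abs_of_pos hy] using abs_im_le_norm ((y : ℂ) * I - x)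
    · have hsub : Tendsto (fun y : ℝ ↦ (1 - (x : ℂ) / (y * I))⁻¹) atTop (𝓝 1) := by
        simpa using ((tendsto_div_ofReal_mul_I x).const_sub 1).inv₀ (by simp)
      refine hsub.congr' ?_
      filter_upwards [eventually_gt_atTop 0] with y hy
      have hyI : (y : ℂ) * I ≠ 0 := by simpa using hy.ne'
      rw [one_sub_div hyI, inv_div, div_eq_mul_inv]
  simpa [cauchyT, integral_const_mul] using hlim

lemma isNormalizedPick_Fmeas (μ : Measure ℝ) [IsProbabilityMeasure μ] :
    IsNormalizedPick (Fmeas μ) where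
  differentiableOn := differentiableOn_cauchyT.inv fun z hz h ↦ by
    simpa [h] using im_cauchyT_neg (μ := μ) hz
  mapsTo z hz := inv_mem_UHP_iff.2 (im_cauchyT_neg hz)
  tendsto_div := by
    have hinv : Tendsto (fun y : ℝ ↦ (y * I * cauchyT μ (y * I))⁻¹) atTop (𝓝 1) := by
      simpa using (tendsto_mul_cauchyT (μ := μ)).inv₀ one_ne_zero
    refine hinv.congr fun y ↦ ?_
    rw [mul_inv, mul_comm, ← div_eq_mul_inv, Fmeas]

end CauchyTransform

section Herglotz

lemma continuousOn_poissonKernel {w : ℂ} (hw : w ∈ ball (0 : ℂ) 1) :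
    ContinuousOn (poissonKernel 0 w) (sphere 0 1) := by
  rw [poissonKernel_eq_re_herglotzRieszKernel]
  simpa using continuous_re.comp_continuousOn (continuousOn_herglotzRieszKernel_sphere hw)

lemma integrable_poissonKernel {σ : Measure (sphere (0 : ℂ) 1)} [IsFiniteMeasure σ] {w : ℂ}
    (hw : w ∈ ball (0 : ℂ) 1) :
    Integrable (fun ζ : sphere (0 : ℂ) 1 ↦ poissonKernel 0 w ζ) σ :=
  (continuousOn_poissonKernel hw).domRestrict.integrable_of_hasCompactSupport (.of_compactSpace _)

lemma poissonKernel_nonneg {w ζ : ℂ} (hw : w ∈ ball (0 : ℂ) 1) (hζ : ζ ∈ sphere (0 : ℂ) 1) :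
    0 ≤ poissonKernel 0 w ζ := by
  rw [mem_ball_zero_iff] at hw
  rw [mem_sphere_zero_iff_norm] at hζ
  rw [poissonKernel_def, sub_zero, sub_zero, hζ]
  have hsq : ‖w‖ ^ 2 ≤ 1 ^ 2 := by gcongr
  exact div_nonneg (sub_nonneg.2 hsq) (sq_nonneg _)

lemma poissonKernel_zero_zero {ζ : ℂ} (hζ : ζ ≠ 0) : poissonKernel 0 0 ζ = 1 := by
  simp [poissonKernel_def, hζ]

/-- The point `e^{iθ}` of the unit circle. -/
noncomputable def expMapSphere (θ : ℝ) : sphere (0 : ℂ) 1 :=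
  ⟨circleMap 0 1 θ, circleMap_mem_sphere 0 zero_le_one θ⟩

lemma continuous_expMapSphere : Continuous expMapSphere :=
  (continuous_circleMap 0 1).subtype_mk _

/-- The measure with density `h` with respect to normalized arc length on the unit circle;
negative values of `h` count as `0`. -/
noncomputable def arcMeasure (h : ℂ → ℝ) : Measure (sphere (0 : ℂ) 1) :=
  ((volume.restrict (Ioc 0 (2 * π))).withDensity
    fun θ ↦ ENNReal.ofReal ((2 * π)⁻¹ * h (circleMap 0 1 θ))).map expMapSphere

lemma integral_arcMeasure {h g : ℂ → ℝ} (hh : ContinuousOn h (sphere 0 1))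
    (hh0 : ∀ ζ ∈ sphere (0 : ℂ) 1, 0 ≤ h ζ) (hg : ContinuousOn g (sphere 0 1)) :
    ∫ ζ, g ζ ∂arcMeasure h = Real.circleAverage (g • h) 0 1 := by
  have hcircle : ∀ θ, circleMap 0 1 θ ∈ sphere (0 : ℂ) 1 := circleMap_mem_sphere 0 zero_le_one
  have hhcircle : Continuous fun θ ↦ h (circleMap 0 1 θ) :=
    hh.comp_continuous (continuous_circleMap 0 1) hcircle
  have hgsphere : Continuous fun ζ : sphere (0 : ℂ) 1 ↦ g ζ :=
    hg.comp_continuous continuous_subtype_val Subtype.property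
  rw [arcMeasure, integral_map continuous_expMapSphere.aemeasurable hgsphere.aestronglyMeasurable,
    integral_withDensity_eq_integral_toReal_smul (hhcircle.measurable.const_mul _).ennreal_ofReal
      (.of_forall fun _ ↦ ENNReal.ofReal_lt_top),
    Real.circleAverage_def, intervalIntegral.integral_of_le (by positivity), ← integral_smul]
  refine integral_congr_ae (.of_forall fun θ ↦ ?_)
  have hnonneg : 0 ≤ (2 * π)⁻¹ * h (circleMap 0 1 θ) :=
    mul_nonneg (by positivity) (hh0 _ (hcircle θ))
  simp only [expMapSphere, ENNReal.toReal_ofReal hnonneg, smul_eq_mul, Pi.smul_apply']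
  ring

variable {f : ℂ → ℂ} {r : ℝ}

lemma ofReal_mul_mem_ball {w : ℂ} (hr : r ∈ Ico (0 : ℝ) 1) (hw : w ∈ closedBall (0 : ℂ) 1) :
    (r : ℂ) * w ∈ ball (0 : ℂ) 1 := by
  rw [mem_closedBall_zero_iff] at hw
  rw [mem_ball_zero_iff, norm_mul, norm_real, Real.norm_of_nonneg hr.1]
  exact (mul_le_of_le_one_right hr.1 hw).trans_lt hr.2

lemma integral_poissonKernel_arcMeasure (hf : DifferentiableOn ℂ f (ball 0 1))
    (hre : ∀ w ∈ ball (0 : ℂ) 1, 0 ≤ (f w).re) (hr : r ∈ Ico (0 : ℝ) 1) {w : ℂ}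
    (hw : w ∈ ball (0 : ℂ) 1) :
    ∫ ζ, poissonKernel 0 w ζ ∂arcMeasure (fun ζ ↦ (f (r * ζ)).re) = (f (r * w)).re := by
  have hharm : InnerProductSpace.HarmonicOnNhd (fun ζ ↦ (f (r * ζ)).re) (closedBall 0 1) :=
    fun ζ hζ ↦ AnalyticAt.harmonicAt_re <|
      (hf.analyticAt (isOpen_ball.mem_nhds (ofReal_mul_mem_ball hr hζ))).fun_comp
        (f := fun ζ ↦ (r : ℂ) * ζ) (by fun_prop)
  rw [integral_arcMeasure (hharm.continuousOn.mono sphere_subset_closedBall)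
    (fun ζ hζ ↦ hre _ (ofReal_mul_mem_ball hr (sphere_subset_closedBall hζ)))
    (continuousOn_poissonKernel hw)]
  exact hharm.circleAverage_poissonKernel_smul hw

lemma isProbabilityMeasure_arcMeasure (hf : DifferentiableOn ℂ f (ball 0 1))
    (hre : ∀ w ∈ ball (0 : ℂ) 1, 0 ≤ (f w).re) (hf0 : (f 0).re = 1) (hr : r ∈ Ico (0 : ℝ) 1) :
    IsProbabilityMeasure (arcMeasure fun ζ ↦ (f (r * ζ)).re) := by
  have hmass := integral_poissonKernel_arcMeasure hf hre hr (mem_ball_self one_pos)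
  have hone : ∀ ζ : sphere (0 : ℂ) 1, poissonKernel 0 0 ζ = 1 := fun ζ ↦
    poissonKernel_zero_zero (ne_zero_of_mem_unit_sphere ζ)
  simpa [hone, hf0, isProbabilityMeasure_iff_real] using hmass

/- The measure is a weak limit of the densities of `re f` on circles of radius `r → 1`. -/
theorem exists_integral_poissonKernel_eq_re (hf : DifferentiableOn ℂ f (ball 0 1))
    (hre : ∀ w ∈ ball (0 : ℂ) 1, 0 ≤ (f w).re) (hf0 : (f 0).re = 1) :
    ∃ σ : Measure (sphere (0 : ℂ) 1), IsProbabilityMeasure σ ∧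
      ∀ w ∈ ball (0 : ℂ) 1, ∫ ζ, poissonKernel 0 w ζ ∂σ = (f w).re := by
  obtain ⟨r, -, hr, hrlim⟩ := exists_seq_strictMono_tendsto' (zero_lt_one' ℝ)
  have hrIco : ∀ n, r n ∈ Ico (0 : ℝ) 1 := fun n ↦ Ioo_subset_Ico_self (hr n)
  let σ (n : ℕ) : ProbabilityMeasure (sphere (0 : ℂ) 1) :=
    ⟨_, isProbabilityMeasure_arcMeasure hf hre hf0 (hrIco n)⟩
  obtain ⟨σlim, φ, hφ, hσ⟩ := CompactSpace.tendsto_subseq σ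
  refine ⟨σlim, inferInstance, fun w hw ↦ ?_⟩
  have hweak := ProbabilityMeasure.tendsto_iff_forall_integral_tendsto.1 hσ
    (.mkOfCompact ⟨_, (continuousOn_poissonKernel hw).domRestrict⟩)
  have hradial : Tendsto (fun n ↦ (f (r (φ n) * w)).re) atTop (𝓝 (f w).re) := by
    have hscale : Tendsto (fun n ↦ (r (φ n) : ℂ) * w) atTop (𝓝 w) := by
      simpa using ((continuous_ofReal.tendsto 1).comp
        (hrlim.comp hφ.tendsto_atTop)).mul_const w
    exact (continuous_re.tendsto _).comp
      ((hf.continuousOn.continuousAt (isOpen_ball.mem_nhds hw)).tendsto.comp hscale)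
  refine tendsto_nhds_unique hweak (hradial.congr fun n ↦ ?_)
  exact (integral_poissonKernel_arcMeasure hf hre (hrIco (φ n)) hw).symm

end Herglotz

section HalfPlane

variable {a z : ℂ}

lemma cayleySymm_sub_cayleySymm (ha : a ∈ UHP) {w : ℂ} (hz : 0 ≤ z.im) (hw : 0 ≤ w.im) :
    cayleySymm a w - cayleySymm a z =
      (w - z) * (a - conj a) / ((w - conj a) * (z - conj a)) := by
  have hza := sub_conj_ne_zero ha hz
  have hwa := sub_conj_ne_zero ha hw
  rw [cayleySymm, cayleySymm]
  field_simp
  ring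

lemma norm_sub_conj_self_sq (a : ℂ) : ‖a - conj a‖ ^ 2 = 4 * a.im ^ 2 := by
  rw [norm_sub_conj_sq, sub_self, norm_zero]
  ring

lemma poissonKernel_cayleySymm_one (ha : a ∈ UHP) (hz : z ∈ UHP) :
    poissonKernel 0 (cayleySymm a z) 1 = z.im / a.im := by
  have ha' : a.im ≠ 0 := ne_of_gt ha
  have hza : ‖z - conj a‖ ≠ 0 := norm_ne_zero_iff.2 (sub_conj_ne_zero ha (le_of_lt hz))
  rw [poissonKernel_def, sub_zero, sub_zero, norm_one, one_pow,
    one_sub_norm_cayleySymm_sq ha (le_of_lt hz), one_sub_cayleySymm ha (le_of_lt hz), norm_div,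
    div_pow, norm_sub_conj_self_sq]
  field_simp

lemma poissonKernel_cayleySymm_ofReal (ha : a ∈ UHP) (hz : z ∈ UHP) (x : ℝ) :
    poissonKernel 0 (cayleySymm a z) (cayleySymm a x) =
      ‖x - a‖ ^ 2 / a.im * -((z - x)⁻¹).im := by
  have ha' : a.im ≠ 0 := ne_of_gt ha
  have hx : 0 ≤ (x : ℂ).im := (ofReal_im x).ge
  have hza : ‖z - conj a‖ ≠ 0 := norm_ne_zero_iff.2 (sub_conj_ne_zero ha (le_of_lt hz))
  have hxa : ‖x - conj a‖ ^ 2 = ‖x - a‖ ^ 2 := by simp [norm_sub_conj_sq]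
  have hxa0 : ‖x - a‖ ≠ 0 := norm_ne_zero_iff.2 fun h ↦ ha' (by simpa using congrArg im h)
  have hnum : 1 - ‖cayleySymm a x‖ ^ 2 = 0 := by simp [one_sub_norm_cayleySymm_sq ha hx]
  have hzx : ‖z - x‖ ≠ 0 := norm_ne_zero_iff.2 fun h ↦ by
    simpa [h, UHP] using sub_ofReal_mem_UHP hz x
  rw [poissonKernel_def, sub_zero, sub_zero, ← sub_eq_zero.1 hnum,
    one_sub_norm_cayleySymm_sq ha (le_of_lt hz), cayleySymm_sub_cayleySymm ha (le_of_lt hz) hx,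
    norm_div, norm_mul, norm_mul, div_pow, mul_pow, mul_pow, norm_sub_conj_self_sq, hxa,
    norm_sub_rev (x : ℂ) z, inv_im, normSq_eq_norm_sq, sub_im, ofReal_im, sub_zero]
  field_simp

/-- The real point of `ℝ ∪ {∞}` that the Cayley transform `cayley I` assigns to a point of the
unit circle; the value at `1`, which corresponds to `∞`, is junk. -/
noncomputable def boundaryPoint (ζ : sphere (0 : ℂ) 1) : ℝ := (cayley I ζ).re

lemma measurable_boundaryPoint : Measurable boundaryPoint := by
  unfold boundaryPoint cayley
  fun_prop

lemma cayleySymm_boundaryPoint {ζ : sphere (0 : ℂ) 1} (hζ : ζ ≠ 1) :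
    cayleySymm I (boundaryPoint ζ) = ζ := by
  have hreal : (boundaryPoint ζ : ℂ) = cayley I ζ :=
    Complex.ext rfl (by simp [im_cayley])
  rw [hreal, cayleySymm_cayley I_mem_UHP fun h ↦ hζ (Subtype.ext h)]

/-- The measure on `ℝ` against which the half-plane Poisson kernel has the same integrals as the
disc Poisson kernel has against `σ`, the atom at `1` (the point at infinity) being left out. -/
noncomputable def boundaryMeasure (σ : Measure (sphere (0 : ℂ) 1)) : Measure ℝ :=
  ((σ.restrict {1}ᶜ).map boundaryPoint).withDensity fun x ↦ ENNReal.ofReal (‖x - I‖ ^ 2)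

lemma lintegral_poissonKernel_cayleySymm (σ : Measure (sphere (0 : ℂ) 1)) (hz : z ∈ UHP) :
    ∫⁻ ζ, ENNReal.ofReal (poissonKernel 0 (cayleySymm I z) ζ) ∂σ =
      σ {1} * ENNReal.ofReal z.im +
        ∫⁻ x : ℝ, ENNReal.ofReal (-((z - x)⁻¹).im) ∂boundaryMeasure σ := by
  have hone : poissonKernel 0 (cayleySymm I z) (1 : sphere (0 : ℂ) 1) = z.im := by
    simpa using poissonKernel_cayleySymm_one I_mem_UHP hz
  rw [← lintegral_add_compl _ (measurableSet_singleton 1), lintegral_singleton, hone,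
    mul_comm (ENNReal.ofReal z.im), boundaryMeasure,
    lintegral_withDensity_eq_lintegral_mul _ (by fun_prop) (by fun_prop),
    lintegral_map (by fun_prop) measurable_boundaryPoint]
  congr 1
  refine setLIntegral_congr_fun (measurableSet_singleton 1).compl fun ζ hζ ↦ ?_
  have hker := poissonKernel_cayleySymm_ofReal I_mem_UHP hz (boundaryPoint ζ)
  rw [cayleySymm_boundaryPoint hζ, I_im, div_one] at hker
  rw [hker, ENNReal.ofReal_mul (by positivity), Pi.mul_apply]

variable {G : ℂ → ℂ}

theorem exists_ofReal_neg_im_eq_lintegral (hG : DifferentiableOn ℂ G UHP)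
    (hneg : ∀ z ∈ UHP, (G z).im < 0) :
    ∃ (b : ℝ≥0∞) (ν : Measure ℝ), ∀ z ∈ UHP, ENNReal.ofReal (-(G z).im) =
      b * ENNReal.ofReal z.im + ∫⁻ x : ℝ, ENNReal.ofReal (-((z - x)⁻¹).im) ∂ν := by
  set c : ℝ := -(G I).im with hc
  have hcpos : 0 < c := neg_pos.2 (hneg I I_mem_UHP)
  set f : ℂ → ℂ := fun ζ ↦ I * G (cayley I ζ) / c
  have hfre : ∀ ζ, (f ζ).re = -(G (cayley I ζ)).im / c := fun ζ ↦ by simp [f, div_ofReal_re]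
  have hcayley : MapsTo (cayley I) (ball 0 1) UHP := fun ζ ↦ cayley_mem_UHP I_mem_UHP
  have hf : DifferentiableOn ℂ f (ball 0 1) :=
    ((hG.comp (differentiableOn_cayley I) hcayley).const_mul I).div_const _
  have hfnonneg : ∀ ζ ∈ ball (0 : ℂ) 1, 0 ≤ (f ζ).re := fun ζ hζ ↦ by
    rw [hfre]
    exact div_nonneg (neg_nonneg.2 (hneg _ (hcayley hζ)).le) hcpos.le
  have hf0 : (f 0).re = 1 := by rw [hfre, cayley_zero, ← hc, div_self hcpos.ne']
  obtain ⟨σ, _, hσ⟩ := exists_integral_poissonKernel_eq_re hf hfnonneg hf0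
  refine ⟨ENNReal.ofReal c * σ {1}, ENNReal.ofReal c • boundaryMeasure σ, fun z hz ↦ ?_⟩
  have hw := cayleySymm_mem_ball I_mem_UHP hz
  have hre : (f (cayleySymm I z)).re = -(G z).im / c := by
    rw [hfre, cayley_cayleySymm I_mem_UHP (le_of_lt hz)]
  have hlint : ENNReal.ofReal (-(G z).im / c) =
      ∫⁻ ζ, ENNReal.ofReal (poissonKernel 0 (cayleySymm I z) ζ) ∂σ := by
    rw [← hre, ← hσ _ hw]
    exact ofReal_integral_eq_lintegral_ofReal (integrable_poissonKernel hw)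
      (.of_forall fun ζ ↦ poissonKernel_nonneg hw ζ.2)
  rw [lintegral_smul_measure, smul_eq_mul, mul_assoc, ← mul_add,
    ← lintegral_poissonKernel_cayleySymm σ hz, ← hlint, ← ENNReal.ofReal_mul hcpos.le,
    mul_div_cancel₀ _ hcpos.ne']

end HalfPlane

section Asymptotics

variable {G : ℂ → ℂ}

lemma mul_neg_im_inv_sub_ofReal (x : ℝ) {y : ℝ} (hy : 0 < y) :
    y * -(((y : ℂ) * I - x)⁻¹).im = (1 + (x / y) ^ 2)⁻¹ := by
  have hnormSq : normSq ((y : ℂ) * I - x) = y ^ 2 * (1 + (x / y) ^ 2) := by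
    simp only [normSq_apply, sub_re, sub_im, mul_re, mul_im, ofReal_re, ofReal_im, I_re, I_im]
    field_simp
    ring
  have him : ((y : ℂ) * I - x).im = y := by simp
  rw [inv_im, hnormSq, him]
  field_simp

lemma lintegral_inv_one_add_sq (ν : Measure ℝ) {y : ℝ} (hy : 0 < y) :
    ∫⁻ x : ℝ, ENNReal.ofReal (1 + (x / y) ^ 2)⁻¹ ∂ν =
      ENNReal.ofReal y * ∫⁻ x : ℝ, ENNReal.ofReal (-(((y : ℂ) * I - x)⁻¹).im) ∂ν := by
  simp_rw [← mul_neg_im_inv_sub_ofReal _ hy, ENNReal.ofReal_mul hy.le]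
  rw [lintegral_const_mul _ (by fun_prop)]

lemma tendsto_lintegral_inv_one_add_sq (ν : Measure ℝ) {y : ℕ → ℝ} (hpos : ∀ n, 0 < y n)
    (hmono : Monotone y) (hy : Tendsto y atTop atTop) :
    Tendsto (fun n ↦ ∫⁻ x : ℝ, ENNReal.ofReal (1 + (x / y n) ^ 2)⁻¹ ∂ν) atTop (𝓝 (ν univ)) := by
  rw [← lintegral_one]
  refine lintegral_tendsto_of_tendsto_of_monotone (fun n ↦ by fun_prop)
    (.of_forall fun x m n hmn ↦ ?_) (.of_forall fun x ↦ ?_)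
  · have hsq : (x / y n) ^ 2 ≤ (x / y m) ^ 2 := by
      rw [div_pow, div_pow]
      have := hpos m
      gcongr
      exact hmono hmn
    dsimp only
    gcongr
  · have hlim : Tendsto (fun n ↦ (1 + (x / y n) ^ 2)⁻¹) atTop (𝓝 1) := by
      simpa using (((tendsto_const_nhds (x := x)).div_atTop hy).pow 2 |>.const_add 1).inv₀ (by simp)
    simpa using ENNReal.tendsto_ofReal hlim

/- Evaluating at `z = iy` and multiplying by `y`, the linear term becomes `b y²` and the integral
increases to the total mass of `ν` as `y → ∞`. -/
lemma eq_zero_and_isProbabilityMeasure_of_tendsto {b : ℝ≥0∞} {ν : Measure ℝ}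
    (hlim : Tendsto (fun y : ℝ ↦ y * I * G (y * I)) atTop (𝓝 1))
    (hG : ∀ z ∈ UHP, ENNReal.ofReal (-(G z).im) =
      b * ENNReal.ofReal z.im + ∫⁻ x : ℝ, ENNReal.ofReal (-((z - x)⁻¹).im) ∂ν) :
    b = 0 ∧ IsProbabilityMeasure ν := by
  let y (n : ℕ) : ℝ := n + 1
  have hpos : ∀ n, 0 < y n := fun n ↦ by positivity
  have hmono : Monotone y := fun m n hmn ↦ by simpa [y] using hmn
  have hy : Tendsto y atTop atTop :=
    tendsto_atTop_add_const_right _ 1 tendsto_natCast_atTop_atTop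
  have heval : ∀ n, ENNReal.ofReal (y n * I * G (y n * I)).re =
      b * ENNReal.ofReal (y n ^ 2) + ∫⁻ x : ℝ, ENNReal.ofReal (1 + (x / y n) ^ 2)⁻¹ ∂ν := fun n ↦ by
    have hre : (y n * I * G (y n * I)).re = y n * -(G (y n * I)).im := by simp
    have h := hG _ (ofReal_mul_I_mem_UHP (hpos n))
    rw [im_ofReal_mul, I_im, mul_one] at h
    rw [hre, ENNReal.ofReal_mul (hpos n).le, h, mul_add, lintegral_inv_one_add_sq ν (hpos n), sq,
      ENNReal.ofReal_mul (hpos n).le, mul_left_comm]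
  have hleft : Tendsto (fun n ↦ ENNReal.ofReal (y n * I * G (y n * I)).re) atTop (𝓝 1) := by
    simpa using ENNReal.tendsto_ofReal ((continuous_re.tendsto 1).comp (hlim.comp hy))
  have hright : Tendsto (fun n ↦ b * ENNReal.ofReal (y n ^ 2) +
      ∫⁻ x : ℝ, ENNReal.ofReal (1 + (x / y n) ^ 2)⁻¹ ∂ν) atTop (𝓝 (b * ∞ + ν univ)) :=
    (ENNReal.Tendsto.const_mul (ENNReal.tendsto_ofReal_atTop.comp
      ((tendsto_pow_atTop two_ne_zero).comp hy)) (.inl ENNReal.top_ne_zero)).add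
      (tendsto_lintegral_inv_one_add_sq ν hpos hmono hy)
  have hmass : b * ∞ + ν univ = 1 :=
    tendsto_nhds_unique hright (by simpa only [heval] using hleft)
  have hb : b = 0 := by
    by_contra hb
    simp [ENNReal.mul_top hb] at hmass
  exact ⟨hb, ⟨by simpa [hb] using hmass⟩⟩

lemma eqOn_of_im_eq_of_tendsto {K : ℂ → ℂ} (hG : DifferentiableOn ℂ G UHP)
    (hK : DifferentiableOn ℂ K UHP) (him : ∀ z ∈ UHP, (G z).im = (K z).im) {l : ℂ}
    (hGlim : Tendsto (fun y : ℝ ↦ y * I * G (y * I)) atTop (𝓝 l))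
    (hKlim : Tendsto (fun y : ℝ ↦ y * I * K (y * I)) atTop (𝓝 l)) : EqOn G K UHP := by
  obtain ⟨c, hc⟩ := ((hG.sub hK).analyticOnNhd isOpen_UHP).eq_const_of_im_eq_const (c₀ := 0)
    (fun z hz ↦ by simp [him z hz]) isOpen_UHP ⟨⟨I, I_mem_UHP⟩, convex_UHP.isPreconnected⟩
  have hlim : Tendsto (fun y : ℝ ↦ (y * I * G (y * I) - y * I * K (y * I)) * (1 / (y * I)))
      atTop (𝓝 0) := by
    simpa using (hGlim.sub hKlim).mul (tendsto_div_ofReal_mul_I 1)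
  have hconst : Tendsto (fun _ : ℝ ↦ c) atTop (𝓝 0) := by
    refine hlim.congr' ?_
    filter_upwards [eventually_gt_atTop 0] with y hy
    have hyI : (y : ℂ) * I ≠ 0 := by simpa using hy.ne'
    rw [← mul_sub, mul_right_comm, mul_one_div_cancel hyI, one_mul]
    exact hc _ (ofReal_mul_I_mem_UHP hy)
  have hc0 : c = 0 := tendsto_nhds_unique tendsto_const_nhds hconst
  exact fun z hz ↦ sub_eq_zero.1 ((hc z hz).trans hc0)

theorem exists_eqOn_cauchyT (hG : DifferentiableOn ℂ G UHP) (hneg : ∀ z ∈ UHP, (G z).im < 0)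
    (hlim : Tendsto (fun y : ℝ ↦ y * I * G (y * I)) atTop (𝓝 1)) :
    ∃ ν : Measure ℝ, IsProbabilityMeasure ν ∧ EqOn (cauchyT ν) G UHP := by
  obtain ⟨b, ν, hν⟩ := exists_ofReal_neg_im_eq_lintegral hG hneg
  obtain ⟨rfl, _⟩ := eq_zero_and_isProbabilityMeasure_of_tendsto hlim hν
  have him : ∀ z ∈ UHP, (cauchyT ν z).im = (G z).im := fun z hz ↦ by
    have h := hν z hz
    rw [zero_mul, zero_add, ← ofReal_neg_im_cauchyT hz, ENNReal.ofReal_eq_ofReal_iff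
      (neg_nonneg.2 (hneg z hz).le) (neg_nonneg.2 (im_cauchyT_neg hz).le)] at h
    exact (neg_injective h).symm
  exact ⟨ν, inferInstance,
    eqOn_of_im_eq_of_tendsto differentiableOn_cauchyT hG him tendsto_mul_cauchyT hlim⟩

theorem IsNormalizedPick.exists_eqOn_Fmeas {F : ℂ → ℂ} (hF : IsNormalizedPick F) :
    ∃ ν : Measure ℝ, IsProbabilityMeasure ν ∧ EqOn (Fmeas ν) F UHP := by
  have hne : ∀ z ∈ UHP, F z ≠ 0 := fun z hz h ↦ by simpa [h, UHP] using hF.mapsTo hz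
  have hlim : Tendsto (fun y : ℝ ↦ y * I * (F (y * I))⁻¹) atTop (𝓝 1) := by
    simpa [div_eq_mul_inv] using hF.tendsto_div.inv₀ one_ne_zero
  obtain ⟨ν, hν, hGν⟩ := exists_eqOn_cauchyT (G := fun z ↦ (F z)⁻¹) (hF.differentiableOn.inv hne)
    (fun z hz ↦ inv_mem_UHP_iff.1 (by simpa using hF.mapsTo hz)) hlim
  exact ⟨ν, hν, fun z hz ↦ by rw [Fmeas, hGν hz, inv_inv]⟩

end Asymptotics

/-- Existence of the free convolution power `μ^{⊞ t}` for `t ≥ 1`: there are a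
probability measure `μ_t` on `ℝ` and an injective analytic `ω_t : ℂ⁺ → ℂ⁺` with
`F_{μ_t} = F_μ ∘ ω_t`, `ω_t(z) = z/t + (1 − 1/t)·F_{μ_t}(z)`, and
`H_t(ω_t(z)) = z` where `H_t(z) = t·z + (1 − t)·F_μ(z)`. -/
theorem free_convolution_power_exists
    (μ : Measure ℝ) [IsProbabilityMeasure μ] (t : ℝ) (ht : 1 ≤ t) :
    ∃ μt : Measure ℝ, IsProbabilityMeasure μt ∧
    ∃ ωt : ℂ → ℂ,
      DifferentiableOn ℂ ωt UHP ∧ Set.MapsTo ωt UHP UHP ∧ Set.InjOn ωt UHP ∧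
      (∀ z ∈ UHP,
        Fmeas μt z = Fmeas μ (ωt z) ∧
        ωt z = z / (t : ℂ) + (1 - 1 / (t : ℂ)) * Fmeas μt z ∧
        (t : ℂ) * ωt z + (1 - (t : ℂ)) * Fmeas μ (ωt z) = z) := by
  have hF := isNormalizedPick_Fmeas μ
  obtain ⟨ω, hω, hinv⟩ := hF.exists_rightInvOn_powerMap ht
  obtain ⟨μt, hμt, hcomp⟩ := (hF.comp hω).exists_eqOn_Fmeas
  refine ⟨μt, hμt, ω, hω.differentiableOn, hω.mapsTo, hinv.injOn, fun z hz ↦ ?_⟩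
  have hFω : Fmeas μt z = Fmeas μ (ω z) := hcomp hz
  have hHω : (t : ℂ) * ω z + (1 - (t : ℂ)) * Fmeas μ (ω z) = z := hinv hz
  have ht0 : (t : ℂ) ≠ 0 := ofReal_ne_zero.2 (by linarith)
  refine ⟨hFω, ?_, hHω⟩
  rw [hFω]
  field_simp
  linear_combination hHω
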